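/- Let (R, m) be a Noetherian local ring and M a finitely generated R-module of dimension d. Then Ann(H^d_m(M)) = Ann(M/U_M(0)) = {r ∈ R : dim M/(0 :_M r) < d}. In particular, H^d_m(M) ≠ 0. -/

import Mathlib

/-!
All conditions on `r` are equivalent to `dim rM < d`: for `Ann (M/U)` by the maximality of `U`, and
for `dim M/(0 :_M r)` by the isomorphism `M/(0 :_M r) ≅ rM`. The content is that `r` kills
`H^d_m(M)` iff `dim rM < d`, for `M` finite of dimension at most `d`; for `r = 1` this is the
nonvanishing.

If `dim rM < d`, multiplication by `r` on `M` factors through `rM`, and `H^d_m(rM) = 0` by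
Grothendieck vanishing.

Conversely let `r` kill `H^d_m(M)`. The proof is by induction on `d` and uses neither completion nor
duality. For `d = 0` the module is its own `H^0_m`. For larger `d`, dividing by the `m`-torsion `L`
of `M` changes neither the hypothesis (`H^i_m(L) = 0` for `i > 0`, by Artin–Rees) nor the nonmaximal
support of `rM`, so let `M` have positive depth. The module `H = H^{d-1}_m(M)` is Artinian, so prime
avoidance provides an `M`-regular `x ∈ m` for which all the `x^k H` contain a fixed `m^s H`. For
`w ∈ H^{d-1}_m(M/x^k M)`, the element `r w` maps to `0` in `H^d_m(M)`, hence comes from some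
`v ∈ H`; for `a ∈ m^s`, the element `a v` lies in `x^k H`, so `a r w = 0`. By induction
`dim ar(M/x^k M) < d - 1` for all `k`. By Artin–Rees, for large `k` the module `arM/x arM` has
support inside that of `ar(M/x^k M)`, whence `dim arM < d` for all `a ∈ m^s`, and then `dim rM < d`.

The long exact sequences come from `Ext` computed in the derived category, so the argument is
carried out for the direct limit of these `Ext^n(R ⧸ m^t, M)`. It agrees with the local cohomology
defined through derived functors because both kinds of `Ext` are quotients of the cocycles on a
projective resolution by the same submodule.
-/

open IsLocalRing

universe u

/-- The dimension of a module `M`: the Krull dimension of `R ⧸ Ann M`. -/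
noncomputable def moduleDim (R M : Type*) [CommRing R] [AddCommGroup M] [Module R M] :
    WithBot ℕ∞ :=
  ringKrullDim (R ⧸ Module.annihilator R M)

open CategoryTheory Abelian
open scoped Pointwise

/-! ### Artinian modules -/

lemma exists_forall_ge_eq_of_antitone {α : Type*} [PartialOrder α] [WellFoundedLT α]
    {B : ℕ → ℕ → α} (hn : ∀ j, Antitone (B · j)) (hj : ∀ n, Antitone (B n)) :
    ∃ N, ∀ n ≥ N, ∀ j, B n j = B N j := by
  obtain ⟨K, hK⟩ := WellFoundedLT.antitone_chain_condition
    (f := fun k => B k k) fun a b h => (hj b h).trans (hn a h)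
  choose ν hν using fun j => WellFoundedLT.antitone_chain_condition (hn j)
  let N := max K ((Finset.range K).sup ν)
  refine ⟨N, fun n hNn j => ?_⟩
  rcases lt_or_ge j K with hjK | hKj
  · have hνN : ν j ≤ N := le_max_of_le_right (Finset.le_sup (f := ν) (Finset.mem_range.mpr hjK))
    exact (hν j n (hνN.trans hNn)).symm.trans (hν j N hνN)
  · have hKN : K ≤ N := le_max_left _ _
    refine le_antisymm (hn j hNn) ?_
    calc B N j ≤ B K K := (hj N hKj).trans (hn K hKN)
      _ = B (max n j) (max n j) := hK _ (le_max_of_le_right hKj)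
      _ ≤ B n j := (hj _ (le_max_right n j)).trans (hn _ (le_max_left n j))

section Artinian

variable {R A : Type*} [CommRing R] [AddCommGroup A] [Module R A]

lemma isArtinian_of_pow_le_annihilator [IsNoetherianRing R] {I : Ideal R} [I.IsMaximal]
    [Module.Finite R A] {s : ℕ} (h : I ^ s ≤ Module.annihilator R A) : IsArtinian R A := by
  induction s generalizing A with
  | zero =>
    rw [pow_zero, Ideal.one_eq_top, top_le_iff, Module.annihilator_eq_top_iff] at h
    infer_instance
  | succ s ih =>
    let B : Submodule R A := I • ⊤
    have hB : I ^ s ≤ Module.annihilator R B := by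
      intro a ha
      refine Module.mem_annihilator.mpr fun ⟨y, hy⟩ => Subtype.ext ?_
      suffices B ≤ Submodule.torsionBy R A a from this hy
      refine Submodule.smul_le.mpr fun b hb z _ => ?_
      rw [Submodule.mem_torsionBy_iff, smul_smul]
      exact Module.mem_annihilator.mp (h (pow_succ I s ▸ Ideal.mul_mem_mul ha hb)) z
    have : IsArtinian R B := ih hB
    let _ := Ideal.Quotient.field I
    have : Module.Finite (R ⧸ I) (A ⧸ B) := .of_restrictScalars_finite R _ _
    have : IsArtinian R (A ⧸ B) :=
      isArtinian_of_surjective_algebraMap (R := R ⧸ I) Ideal.Quotient.mk_surjective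
    exact isArtinian_of_range_eq_ker B.subtype B.mkQ (by simp)

lemma pow_smul_submodule_antitone (x : R) (C : Submodule R A) :
    Antitone fun j : ℕ => x ^ j • C := by
  refine antitone_nat_of_succ_le fun j => ?_
  rw [pow_succ, mul_smul]
  exact smul_mono_right _ (Submodule.smul_le_self_of_tower x C)

lemma le_of_pow_smul_inf_torsionBy_le {C D : Submodule R A} (hCD : C ≤ D) {x : R}
    (hx : ∀ a : A, ∃ n : ℕ, x ^ n • a = 0)
    (h : ∀ j : ℕ, x ^ j • D ⊓ Submodule.torsionBy R A x ≤ x ^ j • C) : D ≤ C := by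
  have mem_of_pow_smul_eq_zero : ∀ j : ℕ, ∀ a ∈ D, x ^ j • a = 0 → a ∈ C := by
    intro j
    induction j with
    | zero =>
      intro a _ ha
      rw [pow_zero, one_smul] at ha
      exact ha ▸ C.zero_mem
    | succ j ih =>
      intro a haD ha
      have htors : x ^ j • a ∈ Submodule.torsionBy R A x := by
        rwa [Submodule.mem_torsionBy_iff, smul_smul, ← pow_succ']
      obtain ⟨c, hc, hca⟩ := h j ⟨Submodule.smul_mem_pointwise_smul a _ D haD, htors⟩
      have hca : x ^ j • c = x ^ j • a := hca
      have hsub := ih (a - c) (sub_mem haD (hCD hc)) (by rw [smul_sub, hca, sub_self])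
      simpa only [sub_add_cancel] using add_mem hsub hc
  intro a ha
  obtain ⟨n, hn⟩ := hx a
  exact mem_of_pow_smul_eq_zero n a ha hn

/-- A descending chain `Cₙ` is controlled by the submodules `xʲCₙ ∩ (0 : x)` of `(0 : x)`, which
decrease in both indices. -/
lemma isArtinian_of_isArtinian_torsionBy (x : R) (hx : ∀ a : A, ∃ n : ℕ, x ^ n • a = 0)
    [IsArtinian R (Submodule.torsionBy R A x)] : IsArtinian R A := by
  rw [← monotone_stabilizes_iff_artinian]
  intro f
  let C : ℕ → Submodule R A := fun n => OrderDual.ofDual (f n)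
  have hC : Antitone C := fun _ _ h => f.monotone h
  let T := Submodule.torsionBy R A x
  obtain ⟨N, hN⟩ := exists_forall_ge_eq_of_antitone
    (B := fun n j => (x ^ j • C n).comap T.subtype)
    (fun j _ _ h => Submodule.comap_mono (smul_mono_right _ (hC h)))
    (fun n _ _ h => Submodule.comap_mono (pow_smul_submodule_antitone x (C n) h))
  refine ⟨N, fun n hn => show C N = C n from le_antisymm ?_ (hC hn)⟩
  refine le_of_pow_smul_inf_torsionBy_le (hC hn) hx fun j a ha => ?_
  exact (hN n hn j).ge (show (⟨a, ha.2⟩ : T) ∈ _ from ha.1)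

section SupIrred

variable [IsArtinian R A] {B : Submodule R A} (hB : SupIrred B)
include hB

/-- Fitting's lemma: an element acts surjectively or nilpotently on an indecomposable module. -/
lemma smul_eq_self_of_supIrred {y : R} (hy : y ∉ B.annihilator.radical) : y • B = B := by
  let f : Module.End R B := LinearMap.lsmul R B y
  have hf (n : ℕ) (b : B) : (f ^ n) b = y ^ n • b := by
    rw [show f = algebraMap R (Module.End R B) y from rfl, ← map_pow]
    rfl
  obtain ⟨n, hcod, hn⟩ := (f.eventually_codisjoint_ker_pow_range_pow.and
    (Filter.eventually_gt_atTop 0)).exists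
  have hsup : (LinearMap.ker (f ^ n)).map B.subtype ⊔ (LinearMap.range (f ^ n)).map B.subtype =
      B := by
    rw [← Submodule.map_sup, hcod.eq_top, Submodule.map_subtype_top]
  rcases hB.2 hsup with hker | hrange
  · refine absurd ⟨n, Submodule.mem_annihilator.mpr fun b hb => ?_⟩ hy
    obtain ⟨c, hc, rfl⟩ := hker.ge hb
    exact congrArg Subtype.val ((hf n c).symm.trans (LinearMap.mem_ker.mp hc))
  · refine le_antisymm (Submodule.smul_le_self_of_tower y B) fun b hb => ?_
    obtain ⟨_, ⟨c, rfl⟩, rfl⟩ := hrange.ge hb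
    obtain ⟨k, rfl⟩ := Nat.exists_eq_succ_of_ne_zero hn.ne'
    rw [hf, pow_succ', mul_smul]
    exact Submodule.smul_mem_pointwise_smul _ y B (y ^ k • c).2

lemma isPrime_radical_annihilator_of_supIrred : B.annihilator.radical.IsPrime := by
  refine ⟨fun h => ?_, fun {y z} hyz => ?_⟩
  · rw [Ideal.radical_eq_top, Submodule.annihilator_eq_top_iff] at h
    exact hB.ne_bot h
  · by_contra! hcon
    have mem_stabilizer {w : R} (hw : w ∉ B.annihilator.radical) :
        w ∈ MulAction.stabilizerSubmonoid R B := smul_eq_self_of_supIrred hB hw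
    obtain ⟨n, hn⟩ := hyz
    have hfix : (y * z) ^ n • B = B :=
      pow_mem (mul_mem (mem_stabilizer hcon.1) (mem_stabilizer hcon.2)) n
    refine hB.ne_bot (eq_bot_iff.mpr (hfix.ge.trans ?_))
    rintro _ ⟨b, hb, rfl⟩
    exact Submodule.mem_annihilator.mp hn b hb

lemma exists_pow_smul_le_pow_smul_of_supIrred {J : Ideal R} (hJ : J.FG) {x : R}
    (hx : ¬ J ≤ B.annihilator.radical → x ∉ B.annihilator.radical) :
    ∃ s : ℕ, ∀ k : ℕ, J ^ s • B ≤ x ^ k • B := by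
  by_cases hJB : J ≤ B.annihilator.radical
  · obtain ⟨s, hs⟩ := Ideal.exists_pow_le_of_le_radical_of_fg hJB hJ
    refine ⟨s, fun k => (Submodule.smul_le.mpr fun a ha b hb => ?_).trans bot_le⟩
    exact Submodule.mem_annihilator.mp (hs ha) b hb
  · have hfix : x ∈ MulAction.stabilizerSubmonoid R B := smul_eq_self_of_supIrred hB (hx hJB)
    exact ⟨0, fun k => Submodule.smul_le_right.trans (pow_mem hfix k).ge⟩

end SupIrred

/-- The primes are those attached to the summands of a secondary representation of `A`, as far as
they do not contain `J`. -/
lemma exists_finset_isPrime_forall_pow_smul_top_le [IsArtinian R A] {J : Ideal R} (hJ : J.FG) :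
    ∃ Q : Finset (Ideal R), (∀ p ∈ Q, p.IsPrime ∧ ¬ J ≤ p) ∧
      ∀ x : R, (∀ p ∈ Q, x ∉ p) →
        ∃ s : ℕ, ∀ k : ℕ, J ^ s • (⊤ : Submodule R A) ≤ x ^ k • (⊤ : Submodule R A) := by
  classical
  obtain ⟨S, hS, hirr⟩ := exists_supIrred_decomposition (⊤ : Submodule R A)
  refine ⟨(S.image fun B => B.annihilator.radical).filter (¬ J ≤ ·), ?_, fun x hx => ?_⟩
  · simp only [Finset.mem_filter, Finset.mem_image]
    rintro _ ⟨⟨B, hB, rfl⟩, hJB⟩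
    exact ⟨isPrime_radical_annihilator_of_supIrred (hirr hB), hJB⟩
  · have hB (B : S) := exists_pow_smul_le_pow_smul_of_supIrred (hirr B.2) hJ fun hJB =>
      hx _ (Finset.mem_filter.mpr ⟨Finset.mem_image_of_mem _ B.2, hJB⟩)
    choose s hs using hB
    refine ⟨Finset.univ.sup s, fun k => ?_⟩
    calc J ^ Finset.univ.sup s • (⊤ : Submodule R A)
        = ⨆ B : S, J ^ Finset.univ.sup s • B.1 := by
          rw [← hS, Finset.sup_id_eq_sSup, sSup_eq_iSup', Submodule.smul_iSup]
          rfl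
      _ ≤ ⨆ B : S, J ^ s B • B.1 := iSup_mono fun B =>
          Submodule.smul_mono_left (Ideal.pow_le_pow_right (Finset.le_sup (Finset.mem_univ B)))
      _ ≤ x ^ k • ⊤ := iSup_le fun B => (hs B k).trans (smul_mono_right _ le_top)

end Artinian

/-! ### Torsion and prime avoidance -/

section Torsion

variable {R : Type*} [CommRing R] (I : Ideal R)
  (N : Type*) [AddCommGroup N] [Module R N]

lemma exists_forall_quotient_torsionBySet_pow_eq_zero [IsNoetherian R N] :
    ∃ s : ℕ, ∀ z : N ⧸ Submodule.torsionBySet R N (I ^ s : Ideal R),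
      (∀ a ∈ I, a • z = 0) → z = 0 := by
  obtain ⟨s, hs⟩ := WellFoundedGT.monotone_chain_condition
    (⟨fun s => Submodule.torsionBySet R N (I ^ s : Ideal R), fun _ _ h =>
      Submodule.torsionBySet_le_torsionBySet_of_subset (Ideal.pow_le_pow_right h)⟩ :
      ℕ →o Submodule R N)
  refine ⟨s, fun z hz => ?_⟩
  obtain ⟨y, rfl⟩ := Submodule.mkQ_surjective _ z
  rw [Submodule.mkQ_apply, Submodule.Quotient.mk_eq_zero]
  refine (hs (s + 1) s.le_succ).ge (?_ : y ∈ Submodule.torsionBySet R N (I ^ (s + 1) : Ideal R))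
  have hann : I ^ (s + 1) ≤ LinearMap.ker (LinearMap.toSpanSingleton R N y) := by
    rw [pow_succ, Ideal.mul_le]
    intro a ha b hb
    have hby := hz b hb
    rw [Submodule.mkQ_apply, ← Submodule.Quotient.mk_smul, Submodule.Quotient.mk_eq_zero,
      Submodule.mem_torsionBySet_iff] at hby
    simpa only [LinearMap.mem_ker, LinearMap.toSpanSingleton_apply, mul_smul] using hby ⟨a, ha⟩
  exact (Submodule.mem_torsionBySet_iff _ _).mpr fun a => hann a.2

variable {I N} [IsNoetherianRing R] [Module.Finite R N]

lemma exists_isSMulRegular_forall_notMem (hN : ∀ z : N, (∀ a ∈ I, a • z = 0) → z = 0)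
    (Q : Finset (Ideal R)) (hQ : ∀ p ∈ Q, p.IsPrime ∧ ¬ I ≤ p) :
    ∃ x ∈ I, (∀ p ∈ Q, x ∉ p) ∧ IsSMulRegular N x := by
  have hass : ∀ p ∈ associatedPrimes R N, p.IsPrime ∧ ¬ I ≤ p := by
    intro p hp
    rw [AssociatedPrimes.mem_iff, isAssociatedPrime_iff] at hp
    obtain ⟨hprime, z, rfl⟩ := hp
    refine ⟨hprime, fun hle => hprime.ne_top ?_⟩
    have hz : z = 0 := hN z fun a ha => by
      simpa only [Submodule.mem_colon_singleton, Submodule.mem_bot] using hle ha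
    simp [hz]
  have havoid : ∀ p ∈ associatedPrimes R N ∪ Q, p.IsPrime ∧ ¬ I ≤ p := fun p hp =>
    hp.elim (hass p) (hQ p)
  have hnot : ¬ (I : Set R) ⊆ ⋃ p ∈ associatedPrimes R N ∪ Q, (p : Set R) := by
    intro h
    obtain ⟨p, hp, hle⟩ := (I.subset_union_prime_finite (f := id)
      ((associatedPrimes.finite R N).union Q.finite_toSet) ⊥ ⊥
      fun p hp _ _ => (havoid p hp).1).mp h
    exact (havoid p hp).2 hle
  obtain ⟨x, hxI, hx⟩ := Set.not_subset.mp hnot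
  rw [Set.biUnion_union, Set.mem_union, not_or, biUnion_associatedPrimes_eq_compl_regular] at hx
  exact ⟨x, hxI, fun p hp hxp => hx.2 (Set.mem_biUnion hp hxp), not_not.mp hx.1⟩

end Torsion

/-! ### Dimension of the support -/

section Dimension

variable {R : Type*} [CommRing R] {M N P : Type*} [AddCommGroup M] [Module R M]
  [AddCommGroup N] [Module R N] [AddCommGroup P] [Module R P]

lemma supportDim_le_of_ker_le_ker {f : M →ₗ[R] N} {g : M →ₗ[R] P} (hg : Function.Surjective g)
    (h : LinearMap.ker f ≤ LinearMap.ker g) : Module.supportDim R P ≤ Module.supportDim R N :=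
  calc Module.supportDim R P ≤ Module.supportDim R (M ⧸ LinearMap.ker f) :=
        Module.supportDim_le_of_surjective ((LinearMap.ker f).liftQ g h)
          (LinearMap.range_eq_top.mp ((Submodule.range_liftQ _ g h).trans
            (LinearMap.range_eq_top.mpr hg)))
    _ ≤ Module.supportDim R N :=
        Module.supportDim_le_of_injective ((LinearMap.ker f).liftQ f le_rfl)
          (LinearMap.ker_eq_bot.mp (Submodule.ker_liftQ_eq_bot _ _ _ le_rfl))

lemma length_le_supportDim_of_head_mem_support {q : LTSeries (PrimeSpectrum R)}
    (hq : q.head ∈ Module.support R M) : q.length ≤ Module.supportDim R M :=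
  Order.le_krullDim_iff.mpr ⟨LTSeries.mk q.length
    (fun i => ⟨q i, Module.mem_support_mono (q.head_le i) hq⟩) q.strictMono, rfl⟩

lemma mem_support_smul_of_notMem {K : Submodule R M} {p : PrimeSpectrum R} {a : R}
    (hp : p ∈ Module.support R K) (ha : a ∉ p.asIdeal) :
    p ∈ Module.support R ↥(a • K) := by
  obtain ⟨y, hy⟩ := Module.mem_support_iff'.mp hp
  refine Module.mem_support_iff'.mpr
    ⟨⟨a • y.1, Submodule.smul_mem_pointwise_smul _ a K y.2⟩, fun c hc h0 => ?_⟩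
  refine hy (c * a) (fun hca => (p.2.mem_or_mem hca).elim hc ha) (Subtype.ext ?_)
  exact (mul_smul c a y.1).trans (congrArg Subtype.val h0)

lemma supportDim_lt_succ_of_forall_smul_lt_succ [IsLocalRing R] {K : Submodule R M} {d s : ℕ}
    (h : ∀ a ∈ maximalIdeal R ^ s, Module.supportDim R ↥(a • K) < ((d + 1 : ℕ) : WithBot ℕ∞)) :
    Module.supportDim R K < ((d + 1 : ℕ) : WithBot ℕ∞) := by
  by_contra! hcon
  obtain ⟨q, hq⟩ := Order.le_krullDim_iff.mp hcon
  let p : LTSeries (PrimeSpectrum R) := q.map Subtype.val fun _ _ h => h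
  have hlast : (0 : Fin (p.length + 1)) < Fin.last p.length :=
    Fin.lt_def.mpr (hq.symm ▸ d.succ_pos : 0 < q.length)
  have hp : p.head < closedPoint R :=
    (p.strictMono hlast).trans_le (le_maximalIdeal p.last.2.ne_top)
  obtain ⟨a, ha, hap⟩ := Set.exists_of_ssubset
    (show (p.head.asIdeal : Set R) ⊂ maximalIdeal R from hp)
  refine (h (a ^ s) (Ideal.pow_mem_pow ha s)).not_ge (hq ▸ ?_)
  exact length_le_supportDim_of_head_mem_support (q := p)
    (mem_support_smul_of_notMem q.head.2 fun has => hap (p.head.2.mem_of_pow_mem s has))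

variable [IsNoetherianRing R] [Module.Finite R M]

/-- By Artin–Rees, `K ∩ xᵏ⁺¹M ⊆ xK` for large `k`. -/
lemma exists_supportDim_quotSMulTop_le (x : R) (K : Submodule R M) :
    ∃ k : ℕ, Module.supportDim R (QuotSMulTop x K) ≤
      Module.supportDim R (K.map (x ^ (k + 1) • (⊤ : Submodule R M)).mkQ) := by
  obtain ⟨k, hk⟩ := Ideal.exists_pow_inf_eq_pow_smul (Ideal.span {x}) K
  have hAR : x ^ (k + 1) • (⊤ : Submodule R M) ⊓ K ≤ x • K := by
    have h := hk (k + 1) k.le_succ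
    rw [Nat.add_sub_cancel_left, pow_one, Ideal.span_singleton_pow,
      Submodule.ideal_span_singleton_smul, Submodule.ideal_span_singleton_smul] at h
    exact h.le.trans (smul_mono_right _ inf_le_right)
  refine ⟨k, supportDim_le_of_ker_le_ker (f := (Submodule.mkQ _).submoduleMap K)
    (Submodule.mkQ_surjective (x • (⊤ : Submodule R K))) fun y hy => ?_⟩
  rw [Submodule.ker_mkQ]
  obtain ⟨z, hz, hzy⟩ := hAR ⟨(Submodule.Quotient.mk_eq_zero _).mp (congrArg Subtype.val hy), y.2⟩
  exact ⟨⟨z, hz⟩, trivial, Subtype.ext hzy⟩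

lemma supportDim_smul_top_lt_succ_of_forall_quotSMulTop [IsLocalRing R] {x r : R} {d : ℕ}
    (hx : x ∈ maximalIdeal R)
    (h : ∀ k : ℕ, Module.supportDim R
      ↥(r • (⊤ : Submodule R (QuotSMulTop (x ^ (k + 1)) M))) < (d : WithBot ℕ∞)) :
    Module.supportDim R ↥(r • (⊤ : Submodule R M)) < ((d + 1 : ℕ) : WithBot ℕ∞) := by
  obtain ⟨k, hk⟩ := exists_supportDim_quotSMulTop_le x (r • (⊤ : Submodule R M))
  rw [Submodule.map_pointwise_smul, Submodule.map_top, Submodule.range_mkQ] at hk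
  rw [Nat.cast_succ, ENat.WithBot.lt_add_one_iff]
  exact (Module.supportDim_le_supportDim_quotSMulTop_succ hx).trans
    (ENat.WithBot.add_one_le_natCast_iff.mpr (hk.trans_lt (h k)))

end Dimension

/-! ### Local cohomology as a direct limit of `Ext` modules -/

section DirectLimit

variable {R ι : Type*} [Semiring R] [Preorder ι] [Nonempty ι] [IsDirectedOrder ι] [DecidableEq ι]
  {F G H : ι → Type*} [∀ i, AddCommGroup (F i)] [∀ i, Module R (F i)]
  [∀ i, AddCommGroup (G i)] [∀ i, Module R (G i)] [∀ i, AddCommGroup (H i)] [∀ i, Module R (H i)]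
  {φ : ∀ i j, i ≤ j → F i →ₗ[R] F j} {ψ : ∀ i j, i ≤ j → G i →ₗ[R] G j}
  {χ : ∀ i j, i ≤ j → H i →ₗ[R] H j} [DirectedSystem H (χ · · ·)]

lemma exact_directLimitMap {f : ∀ i, F i →ₗ[R] G i} {g : ∀ i, G i →ₗ[R] H i}
    (hf : ∀ i j h, f j ∘ₗ φ i j h = ψ i j h ∘ₗ f i) (hg : ∀ i j h, g j ∘ₗ ψ i j h = χ i j h ∘ₗ g i)
    (hfg : ∀ i, Function.Exact (f i) (g i)) :
    Function.Exact (Module.DirectLimit.map f hf) (Module.DirectLimit.map g hg) := by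
  refine Function.Exact.of_comp_of_mem_range ?_ fun y hy => ?_
  · ext x
    obtain ⟨i, x, rfl⟩ := Module.DirectLimit.exists_of x
    simp [(hfg i).apply_apply_eq_zero]
  · obtain ⟨i, y, rfl⟩ := Module.DirectLimit.exists_of y
    rw [Module.DirectLimit.map_apply_of] at hy
    obtain ⟨j, hij, hj⟩ := Module.DirectLimit.of.zero_exact hy
    obtain ⟨x, hx⟩ := (hfg j _).mp ((LinearMap.congr_fun (hg i j hij) y).trans hj)
    exact ⟨Module.DirectLimit.of R ι F φ j x, by
      rw [Module.DirectLimit.map_apply_of, hx, Module.DirectLimit.of_f]⟩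

end DirectLimit

section ExtLimit

variable {R : Type u} [CommRing R] (I : Ideal R)

/-- The canonical projection `R ⧸ I ^ t' ⟶ R ⧸ I ^ t` for `t ≤ t'`. -/
noncomputable def quotientPowProj {t t' : ℕ} (h : t ≤ t') :
    ModuleCat.of R (R ⧸ I ^ t') ⟶ ModuleCat.of R (R ⧸ I ^ t) :=
  ModuleCat.ofHom (Submodule.factor (Ideal.pow_le_pow_right h))

lemma quotientPowProj_refl (t : ℕ) : quotientPowProj I (le_refl t) = 𝟙 _ := by
  ext
  rfl

lemma quotientPowProj_comp {t t' t'' : ℕ} (h : t ≤ t') (h' : t' ≤ t'') :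
    quotientPowProj I h' ≫ quotientPowProj I h = quotientPowProj I (h.trans h') := by
  ext
  rfl

/-- The transition map `Ext^n(R ⧸ I ^ t, M) → Ext^n(R ⧸ I ^ t', M)`. -/
noncomputable def extTransition (n : ℕ) (M : ModuleCat.{u} R) (t t' : ℕ) (h : t ≤ t') :
    Ext (ModuleCat.of R (R ⧸ I ^ t)) M n →ₗ[R] Ext (ModuleCat.of R (R ⧸ I ^ t')) M n :=
  (Ext.mk₀ (quotientPowProj I h)).precompOfLinear R M (zero_add n)

lemma extTransition_apply {n : ℕ} {M : ModuleCat.{u} R} {t t' : ℕ} (h : t ≤ t')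
    (α : Ext (ModuleCat.of R (R ⧸ I ^ t)) M n) :
    extTransition I n M t t' h α = (Ext.mk₀ (quotientPowProj I h)).comp α (zero_add n) := rfl

instance (n : ℕ) (M : ModuleCat.{u} R) :
    DirectedSystem (fun t => Ext (ModuleCat.of R (R ⧸ I ^ t)) M n) (extTransition I n M · · ·) where
  map_self t α := by rw [extTransition_apply, quotientPowProj_refl, Ext.mk₀_id_comp]
  map_map t t' t'' h h' α := by
    simp only [extTransition_apply, Ext.mk₀_comp_mk₀_assoc, quotientPowProj_comp]

/-- Local cohomology modelled as the direct limit of the modules `Ext^n(R ⧸ I ^ t, M)`, where `Ext`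
is computed in the derived category, so that its long exact sequences are available. -/
abbrev ExtLimit (n : ℕ) (M : ModuleCat.{u} R) : Type u :=
  Module.DirectLimit (fun t => Ext (ModuleCat.of R (R ⧸ I ^ t)) M n) (extTransition I n M)

end ExtLimit

namespace ExtLimit

variable {R : Type u} [CommRing R] (I : Ideal R) {n : ℕ} {M N K : ModuleCat.{u} R}

/-- The class in `ExtLimit I n M` of an element of `Ext^n(R ⧸ I ^ t, M)`. -/
noncomputable abbrev of (t : ℕ) : Ext (ModuleCat.of R (R ⧸ I ^ t)) M n →ₗ[R] ExtLimit I n M :=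
  Module.DirectLimit.of R ℕ _ (extTransition I n M) t

lemma postcompOfLinear_comp_extTransition {k n' : ℕ} (β : Ext M N k) (h : n + k = n') (t t' : ℕ)
    (htt' : t ≤ t') :
    β.postcompOfLinear R _ h ∘ₗ extTransition I n M t t' htt' =
      extTransition I n' N t t' htt' ∘ₗ β.postcompOfLinear R _ h :=
  LinearMap.ext fun _ => Ext.comp_assoc _ _ _ (zero_add n) h (by rw [zero_add, h])

/-- Composition with a class in `Ext^k(M, N)`, as a map `ExtLimit I n M → ExtLimit I (n + k) N`. -/
noncomputable def postcomp {k n' : ℕ} (β : Ext M N k) (h : n + k = n') :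
    ExtLimit I n M →ₗ[R] ExtLimit I n' N :=
  Module.DirectLimit.map (fun t => β.postcompOfLinear R (ModuleCat.of R (R ⧸ I ^ t)) h)
    (postcompOfLinear_comp_extTransition I β h)

lemma postcomp_of {k n' : ℕ} (β : Ext M N k) (h : n + k = n') (t : ℕ)
    (α : Ext (ModuleCat.of R (R ⧸ I ^ t)) M n) :
    postcomp I β h (of I t α) = of I t (α.comp β h) :=
  Module.DirectLimit.map_apply_of _ _ _

variable (n) in
/-- The map on `ExtLimit` induced by a linear map. -/
noncomputable def map (f : M ⟶ N) : ExtLimit I n M →ₗ[R] ExtLimit I n N :=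
  postcomp I (Ext.mk₀ f) (add_zero n)

lemma map_of (f : M ⟶ N) (t : ℕ) (α : Ext (ModuleCat.of R (R ⧸ I ^ t)) M n) :
    map I n f (of I t α) = of I t (α.comp (Ext.mk₀ f) (add_zero n)) :=
  postcomp_of I _ _ _ _

lemma map_comp_apply (f : M ⟶ N) (g : N ⟶ K) (x : ExtLimit I n M) :
    map I n (f ≫ g) x = map I n g (map I n f x) := by
  obtain ⟨t, α, rfl⟩ := Module.DirectLimit.exists_of x
  simp only [map_of, Ext.comp_assoc_of_third_deg_zero, Ext.mk₀_comp_mk₀]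

lemma map_smul_id (r : R) : map I n (r • 𝟙 M) = LinearMap.lsmul R (ExtLimit I n M) r := by
  refine LinearMap.ext fun x => ?_
  obtain ⟨t, α, rfl⟩ := Module.DirectLimit.exists_of x
  rw [map_of, ← Ext.smul_eq_comp_mk₀, map_smul, LinearMap.lsmul_apply]

section LongExactSequence

variable {S : ShortComplex (ModuleCat.{u} R)} (hS : S.ShortExact)

variable (n) in
/-- The connecting map of the long exact sequence. -/
noncomputable def connecting : ExtLimit I n S.X₃ →ₗ[R] ExtLimit I (n + 1) S.X₁ :=
  postcomp I hS.extClass rfl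

include hS in
lemma exact_map_map : Function.Exact (map I n S.f) (map I n S.g) :=
  exact_directLimitMap (postcompOfLinear_comp_extTransition I _ _)
    (postcompOfLinear_comp_extTransition I _ _) fun _ =>
      (ShortComplex.ab_exact_iff_function_exact _).mp (Ext.covariant_sequence_exact₂' _ hS n)

lemma exact_map_connecting : Function.Exact (map I n S.g) (connecting I n hS) :=
  exact_directLimitMap (postcompOfLinear_comp_extTransition I _ _)
    (postcompOfLinear_comp_extTransition I _ _) fun _ =>
      (ShortComplex.ab_exact_iff_function_exact _).mp (Ext.covariant_sequence_exact₃' _ hS n _ rfl)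

lemma exact_connecting_map : Function.Exact (connecting I n hS) (map I (n + 1) S.f) :=
  exact_directLimitMap (postcompOfLinear_comp_extTransition I _ _)
    (postcompOfLinear_comp_extTransition I _ _) fun _ =>
      (ShortComplex.ab_exact_iff_function_exact _).mp (Ext.covariant_sequence_exact₁' _ hS n _ rfl)

end LongExactSequence

lemma exists_pow_smul_eq_zero (x : ExtLimit I n M) : ∃ t, ∀ a ∈ I ^ t, a • x = 0 := by
  obtain ⟨t, α, rfl⟩ := Module.DirectLimit.exists_of x
  refine ⟨t, fun a ha => ?_⟩
  have h0 : a • 𝟙 (ModuleCat.of R (R ⧸ I ^ t)) = 0 := by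
    ext
    change Submodule.Quotient.mk (a • 1) = (0 : R ⧸ I ^ t)
    rwa [smul_eq_mul, mul_one, Submodule.Quotient.mk_eq_zero]
  rw [← map_smul, ← Ext.mk₀_id_comp α, ← Ext.smul_comp, ← Ext.mk₀_smul, h0, Ext.mk₀_zero,
    Ext.zero_comp, map_zero]

section QuotSMulTop

variable {M : Type u} [AddCommGroup M] [Module R M] {x : R} (hx : IsSMulRegular M x)

variable (n) in
/-- The connecting map of `0 → M → M → M/xM → 0`. -/
noncomputable def smulConnecting :
    ExtLimit I n (ModuleCat.of R (QuotSMulTop x M)) →ₗ[R] ExtLimit I (n + 1) (ModuleCat.of R M) :=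
  connecting I n (S := ModuleCat.smulShortComplex (ModuleCat.of R M) x)
    (IsSMulRegular.smulShortComplex_shortExact (M := ModuleCat.of R M) hx)

include hx in
lemma exact_lsmul_map_mkQ : Function.Exact (LinearMap.lsmul R (ExtLimit I n (ModuleCat.of R M)) x)
    (map I n (N := ModuleCat.of R (QuotSMulTop x M)) (ModuleCat.ofHom (Submodule.mkQ _))) :=
  map_smul_id I (M := ModuleCat.of R M) x ▸
    exact_map_map I (S := ModuleCat.smulShortComplex (ModuleCat.of R M) x)
      (IsSMulRegular.smulShortComplex_shortExact (M := ModuleCat.of R M) hx)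

lemma exact_map_mkQ_smulConnecting : Function.Exact
    (map I n (N := ModuleCat.of R (QuotSMulTop x M)) (ModuleCat.ofHom (Submodule.mkQ _)))
    (smulConnecting I n hx) :=
  exact_map_connecting I (S := ModuleCat.smulShortComplex (ModuleCat.of R M) x)
    (IsSMulRegular.smulShortComplex_shortExact (M := ModuleCat.of R M) hx)

lemma exact_smulConnecting_lsmul : Function.Exact (smulConnecting I n hx)
    (LinearMap.lsmul R (ExtLimit I (n + 1) (ModuleCat.of R M)) x) :=
  map_smul_id I (M := ModuleCat.of R M) x ▸
    exact_connecting_map I (S := ModuleCat.smulShortComplex (ModuleCat.of R M) x)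
      (IsSMulRegular.smulShortComplex_shortExact (M := ModuleCat.of R M) hx)

end QuotSMulTop

section DegreeZero

lemma linearEquiv₀_mk₀ (f : M ⟶ N) : Ext.linearEquiv₀ (R := R) (Ext.mk₀ f) = f := by
  rw [← Ext.linearEquiv₀_symm_apply (R := R), LinearEquiv.apply_symm_apply]

/-- Evaluation at `1`, sending the class of `R ⧸ I ^ t ⟶ M` to the image of `1`. -/
noncomputable def eval (M : ModuleCat.{u} R) : ExtLimit I 0 M →ₗ[R] M :=
  Module.DirectLimit.lift R ℕ _ (extTransition I 0 M)
    (fun t => LinearMap.applyₗ (Submodule.Quotient.mk 1 : R ⧸ I ^ t) ∘ₗ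
      (Ext.linearEquiv₀.trans (ModuleCat.homLinearEquiv (S := R))).toLinearMap) fun i j hij α => by
    obtain ⟨f, rfl⟩ := (Ext.mk₀_bijective _ _).surjective α
    simp only [extTransition_apply, Ext.mk₀_comp_mk₀, LinearMap.comp_apply,
      LinearEquiv.coe_coe, LinearEquiv.trans_apply, linearEquiv₀_mk₀]
    rfl

lemma eval_of (t : ℕ) (f : ModuleCat.of R (R ⧸ I ^ t) ⟶ M) :
    eval I M (of I t (Ext.mk₀ f)) = f.hom (Submodule.Quotient.mk 1) := by
  rw [eval, Module.DirectLimit.lift_of, LinearMap.comp_apply, LinearEquiv.coe_coe,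
    LinearEquiv.trans_apply, linearEquiv₀_mk₀]
  rfl

lemma eval_injective : Function.Injective (eval I M) := by
  refine (injective_iff_map_eq_zero _).mpr fun x hx => ?_
  obtain ⟨t, α, rfl⟩ := Module.DirectLimit.exists_of x
  obtain ⟨f, rfl⟩ := (Ext.mk₀_bijective _ _).surjective α
  have hf : f = 0 := by
    ext
    exact (eval_of I t f).symm.trans hx
  rw [hf, Ext.mk₀_zero, map_zero]

lemma exists_eval_eq {y : M} {t : ℕ} (h : ∀ a ∈ I ^ t, a • y = 0) : ∃ x, eval I M x = y :=
  ⟨of I t (Ext.mk₀ (ModuleCat.ofHom ((I ^ t).liftQ (LinearMap.toSpanSingleton R M y) h))),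
    (eval_of I t _).trans (one_smul R y)⟩

end DegreeZero

end ExtLimit

/-! ### Vanishing for modules killed by a power of the ideal -/

section Vanishing

variable {R : Type u} [CommRing R]

lemma mk₀_comp_extClass_comp_eq_zero {F X F' X' : Type u} [AddCommGroup F] [Module R F]
    [AddCommGroup X] [Module R X] [AddCommGroup F'] [Module R F'] [AddCommGroup X'] [Module R X']
    {g : F →ₗ[R] X} (hg : Function.Surjective g) {g' : F' →ₗ[R] X'} (hg' : Function.Surjective g')
    {a : F' →ₗ[R] F} {b : X' →ₗ[R] X} (hab : b ∘ₗ g' = g ∘ₗ a)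
    {N : Submodule R (LinearMap.ker g)}
    (hN : (LinearMap.ker g').map a ≤ N.map (LinearMap.ker g).subtype)
    {L : ModuleCat.{u} R} {j : ℕ} {β : Ext (ModuleCat.of R (LinearMap.ker g)) L j}
    (hβ : (Ext.mk₀ (ModuleCat.ofHom N.subtype)).comp β (zero_add j) = 0) :
    (Ext.mk₀ (ModuleCat.ofHom b)).comp
      ((LinearMap.shortExact_shortComplexKer hg).extClass.comp β (add_comm 1 j))
      (zero_add (j + 1)) = 0 := by
  have hker (y : LinearMap.ker g') : a y ∈ LinearMap.ker g :=
    Submodule.map_subtype_le _ N (hN ⟨y, y.2, rfl⟩)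
  have hmem (y : LinearMap.ker g') : (⟨a y, hker y⟩ : LinearMap.ker g) ∈ N := by
    obtain ⟨z, hz, hzy⟩ := hN ⟨y, y.2, rfl⟩
    rwa [← show z = ⟨a y, hker y⟩ from Subtype.ext hzy]
  let c : LinearMap.ker g' →ₗ[R] N :=
    ((a ∘ₗ (LinearMap.ker g').subtype).codRestrict _ hker).codRestrict N hmem
  let φ : LinearMap.shortComplexKer g' ⟶ LinearMap.shortComplexKer g :=
    { τ₁ := ModuleCat.ofHom c ≫ ModuleCat.ofHom N.subtype
      τ₂ := ModuleCat.ofHom a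
      τ₃ := ModuleCat.ofHom b
      comm₁₂ := rfl
      comm₂₃ := congrArg ModuleCat.ofHom hab.symm }
  have hφ : (Ext.mk₀ φ.τ₁).comp β (zero_add j) = 0 := by
    rw [← Ext.mk₀_comp_mk₀_assoc, hβ, Ext.comp_zero]
  change (Ext.mk₀ φ.τ₃).comp _ _ = 0
  rw [← Ext.comp_assoc _ _ _ (zero_add 1) (add_comm 1 j) (by omega),
    ← ShortComplex.ShortExact.extClass_naturality (LinearMap.shortExact_shortComplexKer hg') _ φ,
    Ext.comp_assoc _ _ _ (add_zero 1) (zero_add j) (by omega), hφ, Ext.comp_zero]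

variable [IsNoetherianRing R] {I : Ideal R} {L : ModuleCat.{u} R} {s : ℕ}

/-- Dimension shifting along `0 → K → F → X → 0` with `F` free reduces the degree; by Artin–Rees,
`K ∩ I ^ (k + t) F` lies in `I ^ t K` for some `k` and all `t`. -/
lemma exists_mk₀_subtype_pow_smul_comp_eq_zero (hL : I ^ s ≤ Module.annihilator R L) {j : ℕ}
    {X : Type u} [AddCommGroup X] [Module R X] [Module.Finite R X]
    (α : Ext (ModuleCat.of R X) L j) :
    ∃ t, (Ext.mk₀ (ModuleCat.ofHom (I ^ t • (⊤ : Submodule R X)).subtype)).comp α (zero_add j)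
      = 0 := by
  induction j generalizing X with
  | zero =>
    obtain ⟨f, rfl⟩ := (Ext.mk₀_bijective _ _).surjective α
    refine ⟨s, ?_⟩
    rw [Ext.mk₀_comp_mk₀, Ext.mk₀_eq_zero_iff]
    ext ⟨y, hy⟩
    suffices I ^ s • (⊤ : Submodule R X) ≤ LinearMap.ker f.hom from this hy
    refine Submodule.smul_le.mpr fun a ha z _ => ?_
    rw [LinearMap.mem_ker, map_smul, Module.mem_annihilator.mp (hL ha)]
  | succ j ih =>
    obtain ⟨m, g, hg⟩ := Module.Finite.exists_fin' R X
    have : Projective (LinearMap.shortComplexKer g).X₂ :=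
      inferInstanceAs (Projective (ModuleCat.of R (Fin m → R)))
    obtain ⟨β, rfl⟩ := precomp_extClass_surjective_of_projective_X₂ L
      (LinearMap.shortExact_shortComplexKer hg) j α
    obtain ⟨t, ht⟩ := ih β
    obtain ⟨k, hk⟩ := Ideal.exists_pow_inf_eq_pow_smul I (LinearMap.ker g)
    let P : Submodule R (Fin m → R) := I ^ (k + t) • ⊤
    have hP : P.map g = I ^ (k + t) • ⊤ := by
      rw [Submodule.map_smul'', Submodule.map_top, LinearMap.range_eq_top.mpr hg]
    refine ⟨k + t, hP ▸ mk₀_comp_extClass_comp_eq_zero hg (g.submoduleMap_surjective P)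
      (a := P.subtype) rfl ?_ ht⟩
    rw [Submodule.map_smul'' (I ^ t) ⊤ (LinearMap.ker g).subtype, Submodule.map_subtype_top]
    rintro _ ⟨y, hy, rfl⟩
    have hyP : (y : Fin m → R) ∈ P ⊓ LinearMap.ker g := ⟨y.2, congrArg Subtype.val hy⟩
    rw [hk _ (Nat.le_add_right k t), Nat.add_sub_cancel_left] at hyP
    exact Submodule.smul_mono le_rfl inf_le_right hyP

lemma ExtLimit.subsingleton_succ_of_pow_le_annihilator (hL : I ^ s ≤ Module.annihilator R L)
    (n : ℕ) : Subsingleton (ExtLimit I (n + 1) L) := by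
  refine subsingleton_of_forall_eq 0 fun x => ?_
  obtain ⟨t, α, rfl⟩ := Module.DirectLimit.exists_of x
  have : Projective (LinearMap.shortComplexKer (I ^ t).mkQ).X₂ :=
    inferInstanceAs (Projective (ModuleCat.of R R))
  obtain ⟨β, rfl⟩ := precomp_extClass_surjective_of_projective_X₂ L
    (LinearMap.shortExact_shortComplexKer (I ^ t).mkQ_surjective) n α
  obtain ⟨v, hv⟩ := exists_mk₀_subtype_pow_smul_comp_eq_zero hL β
  have htv : t ≤ t + v := Nat.le_add_right t v
  rw [← Module.DirectLimit.of_f (hij := htv), extTransition_apply]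
  refine (congrArg (of I (t + v)) (mk₀_comp_extClass_comp_eq_zero (I ^ t).mkQ_surjective
    (I ^ (t + v)).mkQ_surjective (a := .id) rfl ?_ hv)).trans (map_zero _)
  rw [Submodule.map_smul'', Submodule.map_subtype_top, Submodule.map_id, Submodule.ker_mkQ,
    Submodule.ker_mkQ, smul_eq_mul, ← pow_add, add_comm]

end Vanishing

/-! ### Grothendieck vanishing and Artinianness -/

namespace ExtLimit

variable {R : Type u} [CommRing R] {I : Ideal R} {n : ℕ} {M N : Type u} [AddCommGroup M]
  [Module R M] [AddCommGroup N] [Module R N]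

section QuotSMulTop

variable {x : R} (hxI : x ∈ I) (hx : IsSMulRegular M x)

include hxI hx

lemma subsingleton_succ_of_quotSMulTop
    [Subsingleton (ExtLimit I n (ModuleCat.of R (QuotSMulTop x M)))] :
    Subsingleton (ExtLimit I (n + 1) (ModuleCat.of R M)) := by
  have hreg : IsSMulRegular (ExtLimit I (n + 1) (ModuleCat.of R M)) x := by
    refine isSMulRegular_iff_right_eq_zero_of_smul.mpr fun z hz => ?_
    obtain ⟨y, rfl⟩ := (exact_smulConnecting_lsmul I hx z).mp hz
    rw [Subsingleton.elim y 0, map_zero]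
  refine subsingleton_of_forall_eq 0 fun z => ?_
  obtain ⟨t, ht⟩ := exists_pow_smul_eq_zero I z
  exact (hreg.pow t).right_eq_zero_of_smul (ht _ (Ideal.pow_mem_pow hxI t))

lemma isArtinian_succ_of_quotSMulTop [IsNoetherianRing R]
    [IsArtinian R (ExtLimit I n (ModuleCat.of R (QuotSMulTop x M)))] :
    IsArtinian R (ExtLimit I (n + 1) (ModuleCat.of R M)) := by
  have : IsArtinian R (Submodule.torsionBy R (ExtLimit I (n + 1) (ModuleCat.of R M)) x) :=
    isArtinian_of_le (t := LinearMap.range (smulConnecting I n hx)) fun z hz =>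
      (exact_smulConnecting_lsmul I hx z).mp hz
  refine isArtinian_of_isArtinian_torsionBy x fun z => ?_
  obtain ⟨t, ht⟩ := exists_pow_smul_eq_zero I z
  exact ⟨t, ht _ (Ideal.pow_mem_pow hxI t)⟩

omit hxI in
/-- As `r` kills degree `n + 1`, the multiple `r w` of a class `w` with coefficients in `M/xM` lifts
to a class `v` with coefficients in `M`; as `a v` is divisible by `x`, it vanishes modulo `x`. -/
lemma mul_mem_annihilator_quotSMulTop {a r : R}
    (ha : ∀ v : ExtLimit I n (ModuleCat.of R M),
      a • v ∈ x • (⊤ : Submodule R (ExtLimit I n (ModuleCat.of R M))))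
    (hr : r ∈ Module.annihilator R (ExtLimit I (n + 1) (ModuleCat.of R M))) :
    a * r ∈ Module.annihilator R (ExtLimit I n (ModuleCat.of R (QuotSMulTop x M))) := by
  refine Module.mem_annihilator.mpr fun w => ?_
  obtain ⟨v, hv⟩ := (exact_map_mkQ_smulConnecting I hx (r • w)).mp
    (by rw [map_smul, Module.mem_annihilator.mp hr])
  obtain ⟨u, -, hu⟩ := ha v
  rw [mul_smul, ← hv, ← map_smul]
  exact (exact_lsmul_map_mkQ I hx (a • v)).mpr ⟨u, hu⟩

end QuotSMulTop

section TorsionKernel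

variable [IsNoetherianRing R] {f : M →ₗ[R] N} (hf : Function.Surjective f) {s : ℕ}
  (hker : I ^ s ≤ Module.annihilator R (LinearMap.ker f))

include hf hker

lemma map_succ_injective_of_pow_le_annihilator_ker :
    Function.Injective (map I (n + 1) (ModuleCat.ofHom f)) := by
  have := subsingleton_succ_of_pow_le_annihilator (L := f.shortComplexKer.X₁) hker n
  refine (injective_iff_map_eq_zero _).mpr fun z hz => ?_
  obtain ⟨y, rfl⟩ := (exact_map_map I (LinearMap.shortExact_shortComplexKer hf) z).mp hz
  rw [Subsingleton.elim y 0, map_zero]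

lemma map_surjective_of_pow_le_annihilator_ker :
    Function.Surjective (map I n (ModuleCat.ofHom f)) := fun z =>
  have := subsingleton_succ_of_pow_le_annihilator (L := f.shortComplexKer.X₁) hker n
  (exact_map_connecting I (LinearMap.shortExact_shortComplexKer hf) z).mp (Subsingleton.elim _ _)

end TorsionKernel

end ExtLimit

section Annihilator

variable {R : Type*} [CommRing R] {A B : Type*} [AddCommGroup A] [Module R A]
  [AddCommGroup B] [Module R B]

lemma le_annihilator_ker_mkQ_torsionBySet (I : Ideal R) :
    I ≤ Module.annihilator R (LinearMap.ker (Submodule.torsionBySet R A I).mkQ) := fun a ha =>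
  Module.mem_annihilator.mpr fun ⟨_, hy⟩ => Subtype.ext <|
    (Submodule.mem_torsionBySet_iff _ _).mp ((Submodule.ker_mkQ _).le hy) ⟨a, ha⟩

lemma exists_pow_le_annihilator_of_forall_exists_pow_smul_eq_zero [Module.Finite R A] {I : Ideal R}
    (h : ∀ y : A, ∃ t, ∀ a ∈ I ^ t, a • y = 0) : ∃ t, I ^ t ≤ Module.annihilator R A := by
  choose t ht using h
  obtain ⟨S, hS⟩ := Module.Finite.fg_top (R := R) (M := A)
  refine ⟨S.sup t, fun a ha => Module.mem_annihilator.mpr fun _ => ?_⟩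
  suffices Submodule.span R (S : Set A) ≤ Submodule.torsionBy R A a from
    this (hS ▸ Submodule.mem_top)
  exact Submodule.span_le.mpr fun y hy => ht y a (Ideal.pow_le_pow_right (Finset.le_sup hy) ha)

lemma exists_maximalIdeal_pow_le_annihilator_of_supportDim_le_zero [IsNoetherianRing R]
    [IsLocalRing R] [Module.Finite R A] (h : Module.supportDim R A ≤ 0) :
    ∃ s, maximalIdeal R ^ s ≤ Module.annihilator R A := by
  have hmax := Order.krullDim_nonpos_iff_forall_isMax.mp h
  have hle : maximalIdeal R ≤ (Module.annihilator R A).radical := by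
    refine PrimeSpectrum.zeroLocus_subset_zeroLocus_iff _ _ |>.mp fun p hp => ?_
    rw [← Module.support_eq_zeroLocus] at hp
    have hpm : p ≤ closedPoint R := le_maximalIdeal p.isPrime.ne_top
    exact hmax ⟨p, hp⟩ (b := ⟨closedPoint R, Module.mem_support_mono hpm hp⟩) hpm
  obtain ⟨s, hs⟩ := Ideal.exists_radical_pow_le_of_fg (Module.annihilator R A)
    (IsNoetherian.noetherian _)
  exact ⟨s, (Ideal.pow_right_mono hle s).trans hs⟩

lemma supportDim_lt_succ_of_supportDim_map_lt_succ [IsNoetherianRing R] [IsLocalRing R]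
    [Module.Finite R A] {f : A →ₗ[R] B} {s d : ℕ}
    (hker : maximalIdeal R ^ s ≤ Module.annihilator R (LinearMap.ker f)) {K : Submodule R A}
    (h : Module.supportDim R (K.map f) < ((d + 1 : ℕ) : WithBot ℕ∞)) :
    Module.supportDim R K < ((d + 1 : ℕ) : WithBot ℕ∞) := by
  refine supportDim_lt_succ_of_forall_smul_lt_succ (s := s) fun a ha => lt_of_le_of_lt ?_ h
  refine supportDim_le_of_ker_le_ker (f := f.submoduleMap K)
    (g := (LinearMap.lsmul R A a).submoduleMap K) (LinearMap.submoduleMap_surjective _ _)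
    fun y hy => Subtype.ext ?_
  have hay : a • (y : A) = 0 := congrArg Subtype.val
    (Module.mem_annihilator.mp (hker ha) ⟨y, congrArg Subtype.val hy⟩)
  exact hay

end Annihilator

namespace ExtLimit

section Local

variable {R : Type u} [CommRing R] [IsNoetherianRing R] [IsLocalRing R]

theorem subsingleton_of_supportDim_lt {n : ℕ} {M : Type u} [AddCommGroup M] [Module R M]
    [Module.Finite R M] (h : Module.supportDim R M < (n : WithBot ℕ∞)) :
    Subsingleton (ExtLimit (maximalIdeal R) n (ModuleCat.of R M)) := by
  induction n generalizing M with
  | zero =>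
    rw [Nat.cast_zero, WithBot.lt_zero_iff_eq_bot,
      Module.supportDim_eq_bot_iff_subsingleton] at h
    have : Subsingleton (ModuleCat.of R M) := h
    exact (eval_injective (maximalIdeal R) (M := ModuleCat.of R M)).subsingleton
  | succ n ih =>
    obtain ⟨s, hs⟩ := exists_forall_quotient_torsionBySet_pow_eq_zero (maximalIdeal R) M
    let L := Submodule.torsionBySet R M (maximalIdeal R ^ s : Ideal R)
    obtain ⟨x, hx, -, hreg⟩ := exists_isSMulRegular_forall_notMem hs ∅ (by simp)
    have hdim : Module.supportDim R (QuotSMulTop x (M ⧸ L)) < (n : WithBot ℕ∞) := by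
      rw [← ENat.WithBot.add_one_le_natCast_iff,
        Module.supportDim_quotSMulTop_succ_eq_supportDim hreg hx, ← ENat.WithBot.lt_add_one_iff]
      exact lt_of_le_of_lt (Module.supportDim_le_of_surjective L.mkQ L.mkQ_surjective) h
    have := ih hdim
    have := subsingleton_succ_of_quotSMulTop (n := n) hx hreg
    exact (map_succ_injective_of_pow_le_annihilator_ker L.mkQ_surjective
      (le_annihilator_ker_mkQ_torsionBySet _)).subsingleton

lemma isArtinian_zero (M : Type u) [AddCommGroup M] [Module R M] [Module.Finite R M] :
    IsArtinian R (ExtLimit (maximalIdeal R) 0 (ModuleCat.of R M)) := by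
  have : IsNoetherian R (ModuleCat.of R M) := inferInstanceAs (IsNoetherian R M)
  have : IsNoetherian R (ExtLimit (maximalIdeal R) 0 (ModuleCat.of R M)) :=
    isNoetherian_of_injective _ (eval_injective (maximalIdeal R))
  obtain ⟨t, ht⟩ := exists_pow_le_annihilator_of_forall_exists_pow_smul_eq_zero
    fun y : ExtLimit (maximalIdeal R) 0 (ModuleCat.of R M) =>
      exists_pow_smul_eq_zero (maximalIdeal R) y
  exact isArtinian_of_pow_le_annihilator ht

instance isArtinian (n : ℕ) (M : Type u) [AddCommGroup M] [Module R M] [Module.Finite R M] :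
    IsArtinian R (ExtLimit (maximalIdeal R) n (ModuleCat.of R M)) := by
  induction n generalizing M with
  | zero => exact isArtinian_zero M
  | succ n ih =>
    obtain ⟨s, hs⟩ := exists_forall_quotient_torsionBySet_pow_eq_zero (maximalIdeal R) M
    let L := Submodule.torsionBySet R M (maximalIdeal R ^ s : Ideal R)
    obtain ⟨x, hx, -, hreg⟩ := exists_isSMulRegular_forall_notMem hs ∅ (by simp)
    have := ih (QuotSMulTop x (M ⧸ L))
    have := isArtinian_succ_of_quotSMulTop (n := n) hx hreg
    exact isArtinian_of_injective _ (map_succ_injective_of_pow_le_annihilator_ker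
      L.mkQ_surjective (le_annihilator_ker_mkQ_torsionBySet _))

/-! ### The annihilator in top degree -/

variable {M : Type u} [AddCommGroup M] [Module R M] [Module.Finite R M]

lemma mem_annihilator_of_supportDim_smul_top_lt {d : ℕ} {r : R}
    (h : Module.supportDim R ↥(r • (⊤ : Submodule R M)) < (d : WithBot ℕ∞)) :
    r ∈ Module.annihilator R (ExtLimit (maximalIdeal R) d (ModuleCat.of R M)) := by
  have := subsingleton_of_supportDim_lt h
  let f : ModuleCat.of R M ⟶ ModuleCat.of R ↥(r • (⊤ : Submodule R M)) :=
    ModuleCat.ofHom ((LinearMap.lsmul R M r).codRestrict _ fun y =>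
      Submodule.smul_mem_pointwise_smul y r ⊤ Submodule.mem_top)
  let g : ModuleCat.of R ↥(r • (⊤ : Submodule R M)) ⟶ ModuleCat.of R M :=
    ModuleCat.ofHom (Submodule.subtype _)
  have hfg : f ≫ g = r • 𝟙 _ := rfl
  refine Module.mem_annihilator.mpr fun z => ?_
  rw [← LinearMap.lsmul_apply, ← map_smul_id, ← hfg, map_comp_apply,
    Subsingleton.elim (map _ d f z) 0, map_zero]

lemma annihilator_zero_le_of_supportDim_le_zero (hM : Module.supportDim R M ≤ 0) :
    Module.annihilator R (ExtLimit (maximalIdeal R) 0 (ModuleCat.of R M)) ≤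
      Module.annihilator R M := by
  obtain ⟨s, hs⟩ := exists_maximalIdeal_pow_le_annihilator_of_supportDim_le_zero hM
  exact LinearMap.annihilator_le_of_surjective (eval (maximalIdeal R) (ModuleCat.of R M)) fun y =>
    exists_eval_eq (maximalIdeal R) fun a ha => Module.mem_annihilator.mp (hs ha) y

lemma exists_isSMulRegular_forall_pow_smul_top_le
    (hM : ∀ y : M, (∀ a ∈ maximalIdeal R, a • y = 0) → y = 0) (n : ℕ) :
    ∃ x ∈ maximalIdeal R, IsSMulRegular M x ∧ ∃ s, ∀ k,
      maximalIdeal R ^ s • (⊤ : Submodule R (ExtLimit (maximalIdeal R) n (ModuleCat.of R M))) ≤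
        x ^ k • ⊤ := by
  obtain ⟨Q, hQ, hQx⟩ := exists_finset_isPrime_forall_pow_smul_top_le
    (A := ExtLimit (maximalIdeal R) n (ModuleCat.of R M)) (IsNoetherian.noetherian (maximalIdeal R))
  obtain ⟨x, hx, hxQ, hreg⟩ := exists_isSMulRegular_forall_notMem hM Q hQ
  exact ⟨x, hx, hreg, hQx x hxQ⟩

theorem supportDim_smul_top_lt_of_mem_annihilator {d : ℕ}
    (hM : Module.supportDim R M ≤ (d : WithBot ℕ∞)) {r : R}
    (hr : r ∈ Module.annihilator R (ExtLimit (maximalIdeal R) d (ModuleCat.of R M))) :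
    Module.supportDim R ↥(r • (⊤ : Submodule R M)) < (d : WithBot ℕ∞) := by
  induction d generalizing M r with
  | zero =>
    have hr' := Module.mem_annihilator.mp (annihilator_zero_le_of_supportDim_le_zero hM hr)
    rw [Nat.cast_zero, WithBot.lt_zero_iff_eq_bot,
      Module.supportDim_eq_bot_iff_subsingleton, Submodule.subsingleton_iff_eq_bot, eq_bot_iff]
    rintro _ ⟨y, -, rfl⟩
    exact hr' y
  | succ d ih =>
    obtain ⟨t, ht⟩ := exists_forall_quotient_torsionBySet_pow_eq_zero (maximalIdeal R) M
    let L := Submodule.torsionBySet R M (maximalIdeal R ^ t : Ideal R)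
    have hker : maximalIdeal R ^ t ≤ Module.annihilator R (LinearMap.ker L.mkQ) :=
      le_annihilator_ker_mkQ_torsionBySet _
    obtain ⟨x, hx, hreg, s, hs⟩ := exists_isSMulRegular_forall_pow_smul_top_le ht d
    have hdim (k : ℕ) :
        Module.supportDim R (QuotSMulTop (x ^ (k + 1)) (M ⧸ L)) ≤ (d : WithBot ℕ∞) := by
      rw [← ENat.WithBot.add_le_add_one_right_iff,
        Module.supportDim_quotSMulTop_succ_eq_supportDim (hreg.pow (k + 1))
          (Ideal.pow_mem_of_mem _ hx (k + 1) k.succ_pos)]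
      exact (Module.supportDim_le_of_surjective L.mkQ L.mkQ_surjective).trans hM
    have hr' : r ∈ Module.annihilator R
        (ExtLimit (maximalIdeal R) (d + 1) (ModuleCat.of R (M ⧸ L))) :=
      LinearMap.annihilator_le_of_surjective _
        (map_surjective_of_pow_le_annihilator_ker L.mkQ_surjective hker) hr
    have hquot : Module.supportDim R ↥(r • (⊤ : Submodule R (M ⧸ L))) <
        ((d + 1 : ℕ) : WithBot ℕ∞) := by
      refine supportDim_lt_succ_of_forall_smul_lt_succ (s := s) fun a ha => ?_
      rw [smul_smul]
      refine supportDim_smul_top_lt_succ_of_forall_quotSMulTop hx fun k => ih (hdim k) ?_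
      exact mul_mem_annihilator_quotSMulTop (hreg.pow (k + 1))
        (fun v => hs (k + 1) (Submodule.smul_mem_smul ha Submodule.mem_top)) hr'
    refine supportDim_lt_succ_of_supportDim_map_lt_succ hker ?_
    rwa [Submodule.map_pointwise_smul, Submodule.map_top, Submodule.range_mkQ]

theorem mem_annihilator_iff_supportDim_smul_top_lt {d : ℕ}
    (hM : Module.supportDim R M ≤ (d : WithBot ℕ∞)) (r : R) :
    r ∈ Module.annihilator R (ExtLimit (maximalIdeal R) d (ModuleCat.of R M)) ↔
      Module.supportDim R ↥(r • (⊤ : Submodule R M)) < (d : WithBot ℕ∞) :=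
  ⟨supportDim_smul_top_lt_of_mem_annihilator hM, mem_annihilator_of_supportDim_smul_top_lt⟩

end Local

end ExtLimit

/-! ### Comparison with Mathlib's local cohomology -/

noncomputable section Comparison

open Limits Opposite

variable {R : Type u} [CommRing R]

/-- The linear equivalence between two quotients of the same module by the same kernel. -/
def equivOfKerEq {W A B : Type*} [AddCommGroup W] [Module R W] [AddCommGroup A] [Module R A]
    [AddCommGroup B] [Module R B] {f : W →ₗ[R] A} {g : W →ₗ[R] B} (hf : Function.Surjective f)
    (hg : Function.Surjective g) (h : LinearMap.ker f = LinearMap.ker g) : A ≃ₗ[R] B :=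
  (f.quotKerEquivOfSurjective hf).symm ≪≫ₗ Submodule.quotEquivOfEq _ _ h ≪≫ₗ
    g.quotKerEquivOfSurjective hg

lemma equivOfKerEq_apply {W A B : Type*} [AddCommGroup W] [Module R W] [AddCommGroup A]
    [Module R A] [AddCommGroup B] [Module R B] {f : W →ₗ[R] A} {g : W →ₗ[R] B}
    (hf : Function.Surjective f) (hg : Function.Surjective g)
    (h : LinearMap.ker f = LinearMap.ker g) (w : W) : equivOfKerEq hf hg h (f w) = g w := by
  have hw : (f.quotKerEquivOfSurjective hf).symm (f w) = Submodule.Quotient.mk w :=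
    (LinearEquiv.symm_apply_eq _).mpr rfl
  rw [equivOfKerEq, LinearEquiv.trans_apply, LinearEquiv.trans_apply, hw]
  rfl

variable {X X' : ModuleCat.{u} R} (P : ProjectiveResolution X) (P' : ProjectiveResolution X')
  (M : ModuleCat.{u} R) (n : ℕ)

/-- The chain complex in the opposite category which computes `Ext(X, M)` from a projective
resolution `P` of `X`: its terms are the modules `Hom(P_n, M)`. -/
abbrev homComplex : ChainComplex (ModuleCat.{u} R)ᵒᵖ ℕ :=
  (((linearYoneda R (ModuleCat.{u} R)).obj M).rightOp.mapHomologicalComplex _).obj P.complex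

/-- The module of cocycles of `Hom(P, M)` in degree `n`; the cocycles of a cochain complex are the
opcycles of the opposite chain complex. -/
abbrev homCocycles : ModuleCat.{u} R := ((homComplex P M).opcycles n).unop

/-- The inclusion of the cocycles into `Hom(P_n, M)`. -/
def homCocyclesι : homCocycles P M n →ₗ[R] (P.complex.X n ⟶ M) :=
  ((homComplex P M).pOpcycles n).unop.hom

lemma homCocyclesι_injective : Function.Injective (homCocyclesι P M n) :=
  (ModuleCat.mono_iff_injective _).mp (inferInstanceAs (Mono ((homComplex P M).pOpcycles n).unop))

variable {P M n} in
lemma d_comp_homCocyclesι (w : homCocycles P M n) :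
    P.complex.d (n + 1) n ≫ homCocyclesι P M n w = 0 :=
  congr(Quiver.Hom.unop $((homComplex P M).d_pOpcycles (n + 1) n) w)

variable {P M n} in
lemma exists_homCocyclesι_eq (f : P.complex.X n ⟶ M) (hf : P.complex.d (n + 1) n ≫ f = 0) :
    ∃ w, homCocyclesι P M n w = f :=
  (ShortComplex.moduleCat_exact_iff _).mp (ShortComplex.exact_of_g_is_cokernel (ShortComplex.mk _ _
    ((homComplex P M).d_pOpcycles (n + 1) n))
    ((homComplex P M).opcyclesIsCokernel (n + 1) n (by simp))).unop f hf

/-- The class of a cocycle in the derived functor `Ext^n(-, M)`. -/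
def toDerivedExt : homCocycles P M n →ₗ[R] ((_root_.Ext R (ModuleCat.{u} R) n).obj (op X)).obj M :=
  ((P.isoLeftDerivedObj ((linearYoneda R (ModuleCat.{u} R)).obj M).rightOp n).hom.unop).hom ∘ₗ
    ((homComplex P M).homologyι n).unop.hom

lemma toDerivedExt_surjective : Function.Surjective (toDerivedExt P M n) :=
  (P.isoLeftDerivedObj ((linearYoneda R (ModuleCat.{u} R)).obj M).rightOp
    n).symm.unop.toLinearEquiv.symm.surjective.comp
    ((ModuleCat.epi_iff_surjective _).mp
      (inferInstanceAs (Epi ((homComplex P M).homologyι n).unop)))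

variable {P M n} in
lemma toDerivedExt_eq_zero_iff (w : homCocycles P M n) : toDerivedExt P M n w = 0 ↔
    ∃ g, P.complex.d n ((ComplexShape.down ℕ).next n) ≫ g = homCocyclesι P M n w := by
  let K := homComplex P M
  let p := (ComplexShape.down ℕ).next n
  have hiso : toDerivedExt P M n w = 0 ↔ (K.homologyι n).unop w = 0 :=
    (P.isoLeftDerivedObj ((linearYoneda R (ModuleCat.{u} R)).obj M).rightOp
      n).unop.toLinearEquiv.map_eq_zero_iff
  have hexact : Function.Exact (K.fromOpcycles n p).unop (K.homologyι n).unop :=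
    (ShortComplex.ShortExact.moduleCat_exact_iff_function_exact _).mp
      (ShortComplex.exact_of_f_is_kernel
        (ShortComplex.mk _ _ (K.homologyι_comp_fromOpcycles n p)) (K.homologyIsKernel n p rfl)).unop
  rw [hiso, hexact w]
  refine exists_congr fun g => ?_
  rw [← (homCocyclesι_injective P M n).eq_iff]
  exact Iff.of_eq congr($(congr(Quiver.Hom.unop $(K.p_fromOpcycles n p) g)) = _)

variable {P M n}

lemma smul_extMk {f : P.complex.X n ⟶ M} (hf : P.complex.d (n + 1) n ≫ f = 0) (r : R) :
    r • P.extMk f (n + 1) rfl hf = P.extMk (r • f) (n + 1) rfl (by simp [hf]) := by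
  rw [Ext.smul_eq_comp_mk₀, ProjectiveResolution.extMk_comp_mk₀]
  congr 1

lemma eq_zero_of_extMk_zero_eq_zero {f : P.complex.X 0 ⟶ M} {hf : P.complex.d 1 0 ≫ f = 0}
    (h : P.extMk f 1 rfl hf = 0) : f = 0 := by
  simp only [← P.extEquivCohomologyClass.apply_eq_iff_eq,
    ProjectiveResolution.extEquivCohomologyClass_extMk,
    ProjectiveResolution.extEquivCohomologyClass_zero,
    CochainComplex.HomComplex.CohomologyClass.mk_eq_zero_iff] at h
  rw [CochainComplex.HomComplex.Cocycle.toSingleMk_mem_coboundaries_iff _ _ _ _ _ 1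
    (by simp)] at h
  obtain ⟨g, hg⟩ := h
  rw [(P.cochainComplex.isZero_of_isStrictlyLE 0 1 (by simp)).eq_of_src g 0, comp_zero] at hg
  rw [← cancel_epi (P.cochainComplexXIso _ 0 rfl).hom, ← hg, comp_zero]

/-- In degree `0` the differential `P.complex.d 0 _` is the junk value `0`, so that coboundaries
vanish, as they should. -/
lemma extMk_eq_zero_iff_exists_d_next {f : P.complex.X n ⟶ M}
    (hf : P.complex.d (n + 1) n ≫ f = 0) : P.extMk f (n + 1) rfl hf = 0 ↔
      ∃ g, P.complex.d n ((ComplexShape.down ℕ).next n) ≫ g = f := by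
  cases n with
  | zero =>
    have hd : P.complex.d 0 ((ComplexShape.down ℕ).next 0) = 0 := P.complex.shape _ _ (by simp)
    simp only [hd, zero_comp, exists_const]
    exact ⟨fun h => (eq_zero_of_extMk_zero_eq_zero h).symm, fun h => by subst h; simp⟩
  | succ n =>
    obtain ⟨p, hp⟩ : ∃ p, p = (ComplexShape.down ℕ).next (n + 1) := ⟨_, rfl⟩
    rw [← hp]
    obtain rfl : p = n := by simpa using hp
    exact P.extMk_eq_zero_iff f _ rfl hf p rfl

variable (P M n) in
/-- The class of a cocycle in the `Ext` of the derived category. -/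
def toExt : homCocycles P M n →ₗ[R] Ext X M n where
  toFun w := P.extMk (homCocyclesι P M n w) (n + 1) rfl (d_comp_homCocyclesι w)
  map_add' w w' := by simp only [map_add, ProjectiveResolution.add_extMk]
  map_smul' r w := by simp only [map_smul, RingHom.id_apply, smul_extMk]

lemma toExt_apply (w : homCocycles P M n) : toExt P M n w =
    P.extMk (homCocyclesι P M n w) (n + 1) rfl (d_comp_homCocyclesι w) := rfl

lemma toExt_surjective : Function.Surjective (toExt P M n) := fun α => by
  obtain ⟨f, hf, rfl⟩ := P.extMk_surjective α (n + 1) rfl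
  obtain ⟨w, rfl⟩ := exists_homCocyclesι_eq f hf
  exact ⟨w, rfl⟩

lemma ker_toDerivedExt_eq_ker_toExt :
    LinearMap.ker (toDerivedExt P M n) = LinearMap.ker (toExt P M n) :=
  Submodule.ext fun w => (toDerivedExt_eq_zero_iff w).trans
    (extMk_eq_zero_iff_exists_d_next (d_comp_homCocyclesι w)).symm

variable (P M n) in
/-- The identification of the derived functor `Ext^n(-, M)` with the `Ext` of the derived category,
by means of the cocycles on a projective resolution. -/
def derivedExtEquiv : ((_root_.Ext R (ModuleCat.{u} R) n).obj (op X)).obj M ≃ₗ[R] Ext X M n :=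
  equivOfKerEq (toDerivedExt_surjective P M n) toExt_surjective ker_toDerivedExt_eq_ker_toExt

variable {P' : ProjectiveResolution X'} {g : X' ⟶ X} (φ : ProjectiveResolution.Hom P' P g)

variable (M n) in
/-- The pullback of cocycles along a morphism of projective resolutions. -/
def homCocyclesMap : homCocycles P M n →ₗ[R] homCocycles P' M n :=
  (HomologicalComplex.opcyclesMap
    ((((linearYoneda R (ModuleCat.{u} R)).obj M).rightOp.mapHomologicalComplex _).map φ.hom)
      n).unop.hom

lemma homCocyclesι_homCocyclesMap (w : homCocycles P M n) :
    homCocyclesι P' M n (homCocyclesMap M n φ w) = φ.hom.f n ≫ homCocyclesι P M n w :=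
  congr(Quiver.Hom.unop $(HomologicalComplex.p_opcyclesMap
    ((((linearYoneda R (ModuleCat.{u} R)).obj M).rightOp.mapHomologicalComplex _).map φ.hom) n) w)

lemma toExt_homCocyclesMap (w : homCocycles P M n) :
    toExt P' M n (homCocyclesMap M n φ w) = (Ext.mk₀ g).comp (toExt P M n w) (zero_add n) := by
  rw [toExt_apply, toExt_apply, P.mk₀_comp_extMk _ _ _ _ φ]
  congr 1
  exact homCocyclesι_homCocyclesMap φ w

lemma toDerivedExt_homCocyclesMap (w : homCocycles P M n) :
    toDerivedExt P' M n (homCocyclesMap M n φ w) =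
      ((_root_.Ext R (ModuleCat.{u} R) n).map g.op).app M (toDerivedExt P M n w) := by
  let F := ((linearYoneda R (ModuleCat.{u} R)).obj M).rightOp
  let ψ := (F.mapHomologicalComplex (ComplexShape.down ℕ)).map φ.hom
  have hι : ((homComplex P' M).homologyι n).unop (homCocyclesMap M n φ w) =
      (HomologicalComplex.homologyMap ψ n).unop (((homComplex P M).homologyι n).unop w) :=
    congr(Quiver.Hom.unop $(HomologicalComplex.homologyι_naturality ψ n) w).symm
  have hiso := ProjectiveResolution.isoLeftDerivedObj_hom_naturality g P' P φ.hom
    (by simpa using φ.hom_f_zero_comp_π_f_zero) F n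
  exact (congrArg (P'.isoLeftDerivedObj F n).hom.unop hι).trans
    congr(Quiver.Hom.unop $hiso (((homComplex P M).homologyι n).unop w)).symm

variable (g) in
lemma derivedExtEquiv_map (α : ((_root_.Ext R (ModuleCat.{u} R) n).obj (op X)).obj M) :
    derivedExtEquiv P' M n (((_root_.Ext R (ModuleCat.{u} R) n).map g.op).app M α) =
      (Ext.mk₀ g).comp (derivedExtEquiv P M n α) (zero_add n) := by
  let φ : ProjectiveResolution.Hom P' P g :=
    ⟨ProjectiveResolution.lift g P' P, ProjectiveResolution.lift_commutes_zero _ P' P⟩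
  obtain ⟨w, rfl⟩ := toDerivedExt_surjective P M n α
  rw [← toDerivedExt_homCocyclesMap φ, derivedExtEquiv, derivedExtEquiv, equivOfKerEq_apply,
    equivOfKerEq_apply, toExt_homCocyclesMap]

instance preservesFilteredColimitsOfSize_forget :
    PreservesFilteredColimitsOfSize.{0, 0} (forget (ModuleCat.{u} R)) :=
  preservesFilteredColimitsOfSize_shrink.{0, u, 0, u} _

lemma bijective_desc {J : Type} [SmallCategory J] [IsFiltered J] {F : J ⥤ ModuleCat.{u} R}
    {c : Cocone F} (hc : IsColimit c) (s : Cocone F) (hsurj : ∀ z : s.pt, ∃ j x, s.ι.app j x = z)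
    (hker : ∀ j x, s.ι.app j x = 0 → ∃ (k : J) (f : j ⟶ k), F.map f x = 0) :
    Function.Bijective (hc.desc s) := by
  have hfac (j : J) (x : F.obj j) : hc.desc s (c.ι.app j x) = s.ι.app j x :=
    congr($(hc.fac s j) x)
  refine ⟨(injective_iff_map_eq_zero _).mpr fun z hz => ?_, fun z => ?_⟩
  · obtain ⟨j, x, rfl⟩ := Concrete.isColimit_exists_rep _ hc z
    obtain ⟨k, f, hf⟩ := hker j x ((hfac j x).symm.trans hz)
    rw [← c.w f, ConcreteCategory.comp_apply, hf, map_zero]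
  · obtain ⟨j, x, rfl⟩ := hsurj z
    exact ⟨c.ι.app j x, hfac j x⟩

variable (I : Ideal R) (M n)

/-- The diagram of the modules `Ext^n(R ⧸ I ^ t, M)` of which local cohomology is the colimit. -/
abbrev extDiagram : ℕᵒᵖᵒᵖ ⥤ ModuleCat.{u} R :=
  localCohomology.diagram (localCohomology.idealPowersDiagram I) n ⋙ (evaluation _ _).obj M

/-- The terms of `extDiagram` in terms of the `Ext` of the derived category. -/
def extDiagramObjEquiv (t : ℕ) :
    (extDiagram M n I).obj (op (op t)) ≃ₗ[R] Ext (ModuleCat.of R (R ⧸ I ^ t)) M n :=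
  derivedExtEquiv (projectiveResolution (ModuleCat.of R (R ⧸ I ^ t))) M n

lemma extDiagramObjEquiv_map {t t' : ℕ} (h : t ≤ t') (α : (extDiagram M n I).obj (op (op t))) :
    extDiagramObjEquiv M n I t' ((extDiagram M n I).map (homOfLE h).op.op α) =
      extTransition I n M t t' h (extDiagramObjEquiv M n I t α) :=
  derivedExtEquiv_map (quotientPowProj I h) α

/-- `ExtLimit I n M` as a cocone over the diagram of which local cohomology is the colimit. -/
def extLimitCocone : Cocone (extDiagram M n I) where
  pt := ModuleCat.of R (ExtLimit I n M)
  ι :=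
    { app t := ModuleCat.ofHom (ExtLimit.of I t.unop.unop ∘ₗ
        (extDiagramObjEquiv M n I t.unop.unop).toLinearMap)
      naturality t t' h := by
        refine ModuleCat.hom_ext (LinearMap.ext fun α => ?_)
        exact (congrArg (ExtLimit.of I _)
          (extDiagramObjEquiv_map M n I (leOfHom h.unop.unop) α)).trans
            Module.DirectLimit.of_f }

/-- Mathlib's local cohomology is the direct limit of the modules `Ext^n(R ⧸ I ^ t, M)` taken in
the derived category. -/
def localCohomologyEquiv : (localCohomology I n).obj M ≃ₗ[R] ExtLimit I n M :=
  have := localCohomology.hasColimitDiagram.{u, 0} (localCohomology.idealPowersDiagram I) n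
  LinearEquiv.ofBijective _ <| bijective_desc
    (isColimitOfPreserves ((evaluation _ (ModuleCat.{u} R)).obj M) (colimit.isColimit
      (localCohomology.diagram (localCohomology.idealPowersDiagram I) n)))
    (extLimitCocone M n I)
    (fun z => by
      obtain ⟨t, α, rfl⟩ := Module.DirectLimit.exists_of z
      obtain ⟨β, rfl⟩ := (extDiagramObjEquiv M n I t).surjective α
      exact ⟨op (op t), β, rfl⟩)
    (fun t α hα => by
      obtain ⟨t', h, h0⟩ := Module.DirectLimit.of.zero_exact hα
      refine ⟨op (op t'), (homOfLE h).op.op, ?_⟩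
      rw [← (extDiagramObjEquiv M n I t').map_eq_zero_iff]
      exact (extDiagramObjEquiv_map M n I h α).trans h0)

end Comparison

/-! ### The unmixed component -/

section UnmixedComponent

variable {R M : Type*} [CommRing R] [AddCommGroup M] [Module R M]

lemma mem_annihilator_quotient_iff_smul_top_le {U : Submodule R M} {r : R} :
    r ∈ Module.annihilator R (M ⧸ U) ↔ r • (⊤ : Submodule R M) ≤ U := by
  rw [Module.mem_annihilator, U.mkQ_surjective.forall]
  refine ⟨?_, fun h y => (Submodule.Quotient.mk_eq_zero U).mpr
    (h (Submodule.smul_mem_pointwise_smul y r ⊤ Submodule.mem_top))⟩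
  rintro h _ ⟨y, -, rfl⟩
  exact (Submodule.Quotient.mk_eq_zero U).mp (h y)

lemma moduleDim_eq_supportDim [Module.Finite R M] : moduleDim R M = Module.supportDim R M :=
  (Module.supportDim_eq_ringKrullDim_quotient_annihilator R M).symm

lemma moduleDim_mono {K L : Submodule R M} (h : K ≤ L) : moduleDim R K ≤ moduleDim R L :=
  ringKrullDim_le_of_surjective (Ideal.Quotient.factor (LinearMap.annihilator_le_of_injective _
    (Submodule.inclusion_injective h))) (Ideal.Quotient.factor_surjective _)

lemma moduleDim_quotient_torsionBy (r : R) :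
    moduleDim R (M ⧸ Submodule.torsionBy R M r) = moduleDim R ↥(r • (⊤ : Submodule R M)) := by
  have e : (M ⧸ Submodule.torsionBy R M r) ≃ₗ[R] ↥(r • (⊤ : Submodule R M)) :=
    (LinearMap.lsmul R M r).quotKerEquivRange ≪≫ₗ
      LinearEquiv.ofEq _ _ (LinearMap.range_eq_map _)
  rw [moduleDim, moduleDim, e.annihilator_eq]

end UnmixedComponent

/-! ### The annihilator of top local cohomology -/

lemma mem_annihilator_localCohomology_iff {R : Type u} [CommRing R] [IsNoetherianRing R]
    [IsLocalRing R] {M : Type u} [AddCommGroup M] [Module R M] [Module.Finite R M] {d : ℕ}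
    (hd : moduleDim R M ≤ (d : WithBot ℕ∞)) (r : R) :
    r ∈ Module.annihilator R ((localCohomology (maximalIdeal R) d).obj (ModuleCat.of R M)) ↔
      moduleDim R ↥(r • (⊤ : Submodule R M)) < (d : WithBot ℕ∞) := by
  rw [moduleDim_eq_supportDim] at hd ⊢
  rw [(localCohomologyEquiv _ d _).annihilator_eq,
    ExtLimit.mem_annihilator_iff_supportDim_smul_top_lt hd]

/-- Let `(R, m)` be a Noetherian local ring and `M` a finitely generated `R`-module of
dimension `d`, with unmixed component `U = U_M(0)` (the largest submodule of dimension
`< d`).  Then `Ann H^d_m(M) = Ann (M/U) = {r : dim M/(0 :_M r) < d}`; in particular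
`H^d_m(M) ≠ 0`. -/
theorem annihilator_top_localCohomology
    {R : Type u} [CommRing R] [IsNoetherianRing R] [IsLocalRing R]
    {M : Type u} [AddCommGroup M] [Module R M] [Module.Finite R M]
    {d : ℕ} (hd : moduleDim R M = d)
    (U : Submodule R M) (hUdim : moduleDim R U < (d : WithBot ℕ∞))
    (hUmax : ∀ N : Submodule R M, moduleDim R N < (d : WithBot ℕ∞) → N ≤ U) :
    Module.annihilator R ((localCohomology (maximalIdeal R) d).obj (ModuleCat.of R M)) =
        Module.annihilator R (M ⧸ U) ∧
    (∀ r : R, r ∈ Module.annihilator R (M ⧸ U) ↔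
        moduleDim R (M ⧸ Submodule.torsionBy R M r) < (d : WithBot ℕ∞)) ∧
    Nontrivial ((localCohomology (maximalIdeal R) d).obj (ModuleCat.of R M)) := by
  have hLC := mem_annihilator_localCohomology_iff (R := R) (M := M) hd.le
  have hU (r : R) : r ∈ Module.annihilator R (M ⧸ U) ↔
      moduleDim R ↥(r • (⊤ : Submodule R M)) < (d : WithBot ℕ∞) :=
    mem_annihilator_quotient_iff_smul_top_le.trans
      ⟨fun h => (moduleDim_mono h).trans_lt hUdim, hUmax _⟩
  refine ⟨Ideal.ext fun r => (hLC r).trans (hU r).symm, fun r => ?_, ?_⟩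
  · rw [hU, moduleDim_quotient_torsionBy]
  · by_contra hN
    have h1 := (hLC 1).mp (by
      rw [Module.annihilator_eq_top_iff.mpr (not_nontrivial_iff_subsingleton.mp hN)]
      exact Submodule.mem_top)
    rw [one_smul, moduleDim, Submodule.topEquiv.annihilator_eq, ← moduleDim, hd] at h1
    exact h1.false
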